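/- Let A ⊆ ℂ and f : 𝔻 × A → ℂ be a holomorphic motion (i.e., f(·,a) is holomorphic for each a ∈ A, f(λ,·) is injective for each λ ∈ 𝔻, and f(0,·) = id). Then for each fixed λ ∈ 𝔻, the map a ↦ f(λ,a) extends to a continuous injection of the closure of A into ℂ. -/

import Mathlib

open Metric Set Filter Topology

lemma aux_log {w : ℂ → ℂ} {r : ℝ} (hr : 0 < r) (hw : DifferentiableOn ℂ w (ball 0 r))
    (h0 : ∀ z ∈ ball (0:ℂ) r, w z ≠ 0) :
    ∃ v : ℂ → ℂ, DifferentiableOn ℂ v (ball 0 r) ∧ v 0 = Complex.log (w 0) ∧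
      ∀ z ∈ ball (0:ℂ) r, Complex.exp (v z) = w z := by
  have hd : DifferentiableOn ℂ (fun z => deriv w z / w z) (ball 0 r) :=
    (hw.deriv isOpen_ball).div hw h0
  obtain ⟨F, hF⟩ := hd.isExactOn_ball
  have hm : (0:ℂ) ∈ ball (0:ℂ) r := mem_ball_self hr
  refine ⟨fun z => F z - F 0 + Complex.log (w 0), ?_, by simp, ?_⟩
  · intro z hz
    exact (((hF z hz).differentiableAt.sub_const _).add_const _).differentiableWithinAt
  · intro z hz
    have key : ∀ z ∈ ball (0:ℂ) r, HasDerivAt (fun z => w z * Complex.exp (-F z)) 0 z := by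
      intro z hz
      have h1 := ((hw z hz).differentiableAt (isOpen_ball.mem_nhds hz)).hasDerivAt
      have h2 := (hF z hz).neg.cexp
      have h3 := h1.mul h2
      have := h0 z hz
      refine h3.congr_deriv ?_
      field_simp
      try ring
    have hc := (convex_ball (0:ℂ) r).norm_image_sub_le_of_norm_hasDerivWithin_le (C := 0)
      (fun z hz => (key z hz).hasDerivWithinAt) (by simp) hm hz
    have hc' : w z * Complex.exp (-F z) = w 0 * Complex.exp (-F 0) := by
      simpa [sub_eq_zero] using hc
    rw [Complex.exp_add, Complex.exp_log (h0 0 hm), sub_eq_add_neg, Complex.exp_add]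
    have e : Complex.exp (F z) * Complex.exp (-F z) = 1 := by
      rw [← Complex.exp_add]; simp
    linear_combination -Complex.exp (F z) * hc' + w z * e

/-- Bloch type estimate. -/
lemma aux_bloch {g : ℂ → ℂ} {R : ℝ} (hR : 0 < R) (hg : DifferentiableOn ℂ g (ball 0 1))
    (hb : ∀ p : ℂ, ∃ q, dist q p < R ∧ ∀ z ∈ ball (0:ℂ) 1, g z ≠ q)
    {r : ℝ} (hr0 : 0 < r) (hr : r < 1) {z : ℂ} (hz : z ∈ closedBall (0:ℂ) r) :
    ‖deriv g z‖ * (r - ‖z‖) ≤ 48 * R := by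
  have hdg : DifferentiableOn ℂ (deriv g) (ball 0 1) := hg.deriv isOpen_ball
  have hsub : closedBall (0:ℂ) r ⊆ ball 0 1 := closedBall_subset_ball hr
  obtain ⟨a, ha, hmax⟩ := (isCompact_closedBall (0:ℂ) r).exists_isMaxOn
    ⟨0, mem_closedBall_self hr0.le⟩ (f := fun z => ‖deriv g z‖ * (r - ‖z‖))
    (((hdg.continuousOn.mono hsub).norm).mul (by fun_prop))
  refine (hmax hz).trans ?_
  simp only
  set m := ‖deriv g a‖ with hm
  have ha' : ‖a‖ ≤ r := by simpa using ha
  by_contra! hcon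
  have hpos : 0 < m * (r - ‖a‖) := lt_trans (by positivity) hcon
  have hm0 : 0 < m := by
    rcases (norm_nonneg (deriv g a)).eq_or_lt with h | h
    · rw [hm, ← h] at hpos; simp at hpos
    · exact h
  have hra : 0 < r - ‖a‖ := pos_of_mul_pos_right hpos hm0.le
  set ρ := (r - ‖a‖) / 2 with hρ
  have hρ0 : 0 < ρ := by positivity
  have hnorm : ∀ z ∈ ball a ρ, ‖z‖ < ‖a‖ + ρ := by
    intro z hz
    have := norm_le_norm_add_norm_sub a z
    rw [norm_sub_rev] at this
    rw [mem_ball, dist_eq_norm] at hz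
    linarith
  have hballr : ball a ρ ⊆ closedBall 0 r := by
    intro z hz
    have := hnorm z hz
    simp; linarith
  have hball1 : ball a ρ ⊆ ball 0 1 := hballr.trans hsub
  have h2m : ∀ z ∈ ball a ρ, ‖deriv g z‖ ≤ 2 * m := by
    intro z hz
    have h1 := hmax (hballr hz)
    simp only [mem_ofPred_eq] at h1
    have h2 := hnorm z hz
    have h3 : ‖deriv g z‖ * ρ ≤ ‖deriv g z‖ * (r - ‖z‖) := by
      gcongr; linarith
    have h4 : ‖deriv g z‖ * ρ ≤ (2 * m) * ρ := by
      calc _ ≤ _ := h3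
        _ ≤ _ := h1
        _ = _ := by rw [hρ, ← hm]; ring
    exact le_of_mul_le_mul_right h4 hρ0
  have hlip : ∀ z ∈ ball a ρ, ‖deriv g z - deriv g a‖ ≤ 3 * m / ρ * ‖z - a‖ := by
    intro z hz
    have := Complex.dist_le_div_mul_dist_of_mapsTo_ball (R₂ := 3 * m) (hdg.mono hball1) (by
      intro y hy
      rw [mem_closedBall, dist_eq_norm]
      have := norm_sub_le (deriv g y) (deriv g a)
      linarith [h2m y hy]) hz
    simpa [dist_eq_norm] using this
  set s := ρ / 6 with hs
  have hs0 : 0 < s := by positivity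
  have hsρ : closedBall a s ⊆ ball a ρ := closedBall_subset_ball (by linarith)
  have hlow : ∀ z ∈ sphere a s, m * s / 2 ≤ ‖g z - g a‖ := by
    intro z hz
    have hzs : ‖z - a‖ = s := by simpa [dist_eq_norm] using hz
    have h1 := (convex_closedBall a s).norm_image_sub_le_of_norm_hasDerivWithin_le
      (f := fun z => g z - deriv g a * z) (f' := fun z => deriv g z - deriv g a)
      (C := 3 * m / ρ * s) (x := a) (y := z) (by
        intro y hy
        have h1 := (hg.differentiableAt (isOpen_ball.mem_nhds (hball1 (hsρ hy)))).hasDerivAt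
        have h2 := h1.sub ((hasDerivAt_id y).const_mul (deriv g a))
        rw [mul_one] at h2
        exact h2.hasDerivWithinAt) (by
        intro y hy
        refine (hlip y (hsρ hy)).trans ?_
        gcongr
        simpa [dist_eq_norm] using hy) (mem_closedBall_self hs0.le) (sphere_subset_closedBall hz)
    rw [hzs] at h1
    have h2 : 3 * m / ρ * s * s = m * s / 2 := by rw [hs]; field_simp; ring
    rw [h2] at h1
    have h3 : ‖deriv g a * (z - a)‖ = m * s := by rw [norm_mul, hzs]
    have h4 := norm_sub_le (g z - g a) (g z - deriv g a * z - (g a - deriv g a * a))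
    have h5 : (g z - g a) - (g z - deriv g a * z - (g a - deriv g a * a))
      = deriv g a * (z - a) := by ring
    rw [h5, h3] at h4
    linarith
  have hda : HasDerivAt g (deriv g a) a :=
    (hg.differentiableAt (isOpen_ball.mem_nhds (hsub ha))).hasDerivAt
  have himg := DiffContOnCl.ball_subset_image_closedBall (f := g) (z₀ := a) (r := s)
    (ε := m * s / 2)
    ((hg.mono (hsρ.trans hball1)).diffContOnCl_ball (Subset.refl _)) hs0 hlow (by
      have := hda.eventually_ne (c := g a) (norm_pos_iff.mp hm0)
      exact this.frequently.filter_mono nhdsWithin_le_nhds)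
  obtain ⟨q, hq, hqn⟩ := hb (g a)
  have hlt : R < m * s / 2 / 2 := by
    rw [hs, hρ]; linarith
  obtain ⟨y, hy, hyq⟩ := himg (mem_ball.mpr (hq.trans hlt))
  exact hqn y (hball1 (hsρ hy)) hyq

/-- lifting through cos -/
lemma aux_cos {u : ℂ → ℂ} (hu : DifferentiableOn ℂ u (ball 0 1))
    (h1 : ∀ z ∈ ball (0:ℂ) 1, u z ≠ 1) (h2 : ∀ z ∈ ball (0:ℂ) 1, u z ≠ -1) :
    ∃ φ : ℂ → ℂ, DifferentiableOn ℂ φ (ball 0 1) ∧ ‖φ 0‖ ≤ 2 * ‖u 0‖ + 4 ∧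
      ∀ z ∈ ball (0:ℂ) 1, Complex.cos (φ z) = u z := by
  obtain ⟨t, ht, -, hte⟩ := aux_log one_pos (w := fun z => 1 - u z ^ 2)
    ((differentiableOn_const _).sub (hu.pow 2)) (by
      intro z hz h
      have : (1 - u z) * (1 + u z) = 0 := by linear_combination h
      rcases mul_eq_zero.mp this with h | h
      · exact h1 z hz (by linear_combination -h)
      · exact h2 z hz (by linear_combination h))
  set s : ℂ → ℂ := fun z => Complex.exp (t z / 2) with hs
  have hsd : DifferentiableOn ℂ s (ball 0 1) := (ht.div_const 2).cexp
  have hs2 : ∀ z ∈ ball (0:ℂ) 1, s z ^ 2 = 1 - u z ^ 2 := by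
    intro z hz
    rw [← hte z hz, hs, ← Complex.exp_nat_mul]
    congr 1; push_cast; ring
  have hprod : ∀ z ∈ ball (0:ℂ) 1, (u z + Complex.I * s z) * (u z - Complex.I * s z) = 1 := by
    intro z hz
    linear_combination hs2 z hz - s z ^ 2 * Complex.I_sq
  obtain ⟨v, hv, hv0, hve⟩ := aux_log one_pos (w := fun z => u z + Complex.I * s z)
    (hu.add (hsd.const_mul _)) (by
      intro z hz h
      have := hprod z hz
      rw [h] at this; simp at this)
  refine ⟨fun z => -Complex.I * v z, hv.const_mul _, ?_, ?_⟩
  · have h0 : (0:ℂ) ∈ ball (0:ℂ) 1 := mem_ball_self one_pos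
    set p := u 0 + Complex.I * s 0 with hp
    set q := u 0 - Complex.I * s 0 with hq
    have hpq : p * q = 1 := hprod 0 h0
    have hsn : ‖s 0‖ ≤ ‖u 0‖ + 1 := by
      have h := congrArg norm (hs2 0 h0)
      rw [norm_pow] at h
      have h' := norm_sub_le (1:ℂ) (u 0 ^ 2)
      rw [norm_one, norm_pow] at h'
      have := norm_nonneg (u 0)
      nlinarith [norm_nonneg (s 0)]
    have hpn : ‖p‖ ≤ 2 * ‖u 0‖ + 1 := by
      have := norm_add_le (u 0) (Complex.I * s 0)
      rw [norm_mul, Complex.norm_I] at this; linarith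
    have hqn : ‖q‖ ≤ 2 * ‖u 0‖ + 1 := by
      have := norm_sub_le (u 0) (Complex.I * s 0)
      rw [norm_mul, Complex.norm_I] at this; linarith
    have hpqn : ‖p‖ * ‖q‖ = 1 := by rw [← norm_mul, hpq, norm_one]
    have hp0 : 0 < ‖p‖ := by
      rcases (norm_nonneg p).eq_or_lt with h | h
      · rw [← h] at hpqn; simp at hpqn
      · exact h
    have hq0 : 0 < ‖q‖ := by
      rcases (norm_nonneg q).eq_or_lt with h | h
      · rw [← h] at hpqn; simp at hpqn
      · exact h
    have hl : |Real.log ‖p‖| ≤ 2 * ‖u 0‖ := by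
      have e : Real.log ‖p‖ + Real.log ‖q‖ = 0 := by
        rw [← Real.log_mul hp0.ne' hq0.ne', hpqn, Real.log_one]
      have := Real.log_le_sub_one_of_pos hp0
      have := Real.log_le_sub_one_of_pos hq0
      rw [abs_le]; constructor <;> linarith
    have : ‖-Complex.I * v 0‖ = ‖Complex.log p‖ := by rw [hv0]; simp [hp]
    simp only [this]
    have h3 := Complex.norm_le_abs_re_add_abs_im (Complex.log p)
    rw [Complex.log_re, Complex.log_im] at h3
    have := Complex.abs_arg_le_pi p
    have := Real.pi_le_four
    linarith
  · intro z hz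
    have e1 := hve z hz
    have e2 : Complex.exp (-v z) = u z - Complex.I * s z := by
      rw [Complex.exp_neg, e1]
      exact inv_eq_of_mul_eq_one_right (hprod z hz)
    rw [Complex.cos]
    have a1 : -Complex.I * v z * Complex.I = v z := by linear_combination -v z * Complex.I_sq
    have a2 : -(-Complex.I * v z) * Complex.I = -v z := by linear_combination v z * Complex.I_sq
    rw [a1, a2, e1, e2]; ring


lemma aux_cos_int (n : ℤ) : Complex.cos (n * Real.pi) = (-1) ^ n := by
  have := congrArg (fun x : ℝ => (x : ℂ)) (Real.cos_int_mul_pi n)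
  push_cast at this
  exact this

lemma aux_cosh_nonneg {y : ℝ} : ∃ t : ℝ, |t - (|y|)| ≤ 2 ∧ ∃ n : ℤ, Real.cosh t = n := by
  have h : ((⌈Real.cosh |y|⌉ : ℤ) : ℝ) ∈ Icc (Real.cosh |y|) (Real.cosh (|y| + 2)) := by
    refine ⟨Int.le_ceil _, ?_⟩
    have h1 := Int.ceil_lt_add_one (Real.cosh |y|)
    have h2 := Real.cosh_add |y| 2
    have h3 : 0 ≤ Real.sinh |y| := Real.sinh_nonneg_iff.mpr (abs_nonneg y)
    have h4 : 0 ≤ Real.sinh 2 := Real.sinh_nonneg_iff.mpr (by norm_num)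
    have h5 := Real.one_le_cosh |y|
    have h6 : 2 ≤ Real.cosh 2 := by
      have := Real.add_one_le_exp (2:ℝ)
      have h7 := Real.add_one_le_exp (1:ℝ)
      have h8 : Real.exp 2 = Real.exp 1 * Real.exp 1 := by rw [← Real.exp_add]; norm_num
      rw [Real.cosh_eq]
      nlinarith [Real.exp_pos (-2)]
    nlinarith [mul_nonneg h3 h4]
  obtain ⟨t, ht, hte⟩ := intermediate_value_Icc (by linarith : |y| ≤ |y| + 2)
    Real.continuous_cosh.continuousOn h
  exact ⟨t, by rw [abs_le]; constructor <;> linarith [ht.1, ht.2], _, hte⟩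

lemma aux_cosh (y : ℝ) : ∃ t : ℝ, |t - y| ≤ 2 ∧ ∃ n : ℤ, Real.cosh t = n := by
  obtain ⟨t, ht, n, hn⟩ := aux_cosh_nonneg (y := y)
  rcases le_total 0 y with h | h
  · rw [abs_of_nonneg h] at ht
    exact ⟨t, ht, n, hn⟩
  · rw [abs_of_nonpos h] at ht
    refine ⟨-t, ?_, n, by rw [Real.cosh_neg, hn]⟩
    rw [← abs_neg]
    convert ht using 2
    ring

lemma aux_cos_int_pi (n : ℤ) : Complex.cos (n * Real.pi) = 1 ∨ Complex.cos (n * Real.pi) = -1 := by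
  rw [aux_cos_int]
  rcases Int.even_or_odd n with h | h
  · left; exact h.neg_one_zpow
  · right; exact h.neg_one_zpow

/-- the grid -/
lemma aux_grid (p : ℂ) : ∃ q : ℂ, dist q p < 8 ∧ ∃ n : ℤ, Complex.cos q = n := by
  obtain ⟨t, ht, n, hn⟩ := aux_cosh p.im
  set k := round (p.re / Real.pi) with hk
  refine ⟨(k : ℂ) * Real.pi + t * Complex.I, ?_, ?_⟩
  · rw [dist_eq_norm]
    refine (Complex.norm_le_abs_re_add_abs_im _).trans_lt ?_
    have h1 : ((k : ℂ) * Real.pi + t * Complex.I - p).im = t - p.im := by simp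
    have h2 : ((k : ℂ) * Real.pi + t * Complex.I - p).re = k * Real.pi - p.re := by simp
    rw [h1, h2]
    have h3 := abs_sub_round (p.re / Real.pi)
    rw [← hk] at h3
    have h4 : |(k:ℝ) * Real.pi - p.re| = |p.re / Real.pi - k| * Real.pi := by
      rw [← abs_of_pos Real.pi_pos, ← abs_mul, abs_of_pos Real.pi_pos, ← abs_neg]
      congr 1
      field_simp
      ring
    have := Real.pi_le_four
    have := Real.pi_pos
    rw [h4]
    nlinarith
  · rw [Complex.cos_add_mul_I, ← Complex.ofReal_cosh, hn, Complex.sin_int_mul_pi]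
    rcases aux_cos_int_pi k with h | h
    · exact ⟨n, by rw [h]; simp⟩
    · exact ⟨-n, by rw [h]; simp⟩

lemma aux_norm_cos (z : ℂ) : ‖Complex.cos z‖ ≤ Real.exp ‖z‖ := by
  rw [Complex.cos, norm_div]
  have h1 := Complex.norm_exp_le_exp_norm (z * Complex.I)
  have h2 := Complex.norm_exp_le_exp_norm (-z * Complex.I)
  have h3 := norm_add_le (Complex.exp (z * Complex.I)) (Complex.exp (-z * Complex.I))
  simp only [norm_mul, norm_neg, Complex.norm_I, mul_one] at h1 h2
  rw [Complex.norm_two, div_le_iff₀ two_pos]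
  linarith

lemma aux_schottky (M ρ : ℝ) (hρ0 : 0 < ρ) (hρ : ρ < 1) : ∃ C : ℝ, ∀ h : ℂ → ℂ,
    DifferentiableOn ℂ h (ball 0 1) → (∀ z ∈ ball (0:ℂ) 1, h z ≠ 0) →
    (∀ z ∈ ball (0:ℂ) 1, h z ≠ 1) → ‖h 0‖ ≤ M → ∀ z ∈ closedBall (0:ℂ) ρ, ‖h z‖ ≤ C := by
  set r := (1 + ρ) / 2 with hr
  set K := (8 * M + 16) + 48 * 8 / (r - ρ) * ρ with hK
  have hrρ : 0 < r - ρ := by rw [hr]; linarith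
  refine ⟨Real.exp (4 * Real.exp K) + 1, ?_⟩
  intro h hd h0 h1 hM z hz
  obtain ⟨φ, hφ, hφ0, hφe⟩ := aux_cos (u := fun z => 2 * h z - 1)
    ((hd.const_mul 2).sub_const 1)
    (by intro z hz e; exact h1 z hz (by linear_combination e / 2))
    (by intro z hz e; exact h0 z hz (by linear_combination e / 2))
  have hpi : (Real.pi : ℂ) ≠ 0 := by exact_mod_cast Real.pi_ne_zero
  have homit : ∀ z ∈ ball (0:ℂ) 1, ∀ n : ℤ, φ z / Real.pi ≠ n := by
    intro z hz n e
    rw [div_eq_iff hpi] at e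
    have e2 := hφe z hz
    rw [e] at e2
    rcases aux_cos_int_pi n with e3 | e3
    · rw [e3] at e2
      exact h1 z hz (by linear_combination -e2 / 2)
    · rw [e3] at e2
      exact h0 z hz (by linear_combination -e2 / 2)
  obtain ⟨ψ, hψ, hψ0, hψe⟩ := aux_cos (u := fun z => φ z / Real.pi) (hφ.div_const _)
    (by intro z hz; simpa using homit z hz 1) (by intro z hz; simpa using homit z hz (-1))
  have hbl : ∀ y ∈ closedBall (0:ℂ) ρ, ‖deriv ψ y‖ ≤ 48 * 8 / (r - ρ) := by
    intro y hy
    have hy' : ‖y‖ ≤ ρ := by simpa using hy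
    have := aux_bloch (g := ψ) (R := 8) (by norm_num) hψ (by
      intro p
      obtain ⟨q, hq, n, hn⟩ := aux_grid p
      refine ⟨q, hq, fun z hz e => homit z hz n ?_⟩
      rw [← hn, ← e, hψe z hz]) (r := r) (by linarith) (by linarith) (z := y)
      (by simp; linarith)
    rw [le_div_iff₀ hrρ]
    refine le_trans ?_ this
    gcongr
  have hsub : closedBall (0:ℂ) ρ ⊆ ball 0 1 := closedBall_subset_ball hρ
  have hmv := (convex_closedBall (0:ℂ) ρ).norm_image_sub_le_of_norm_deriv_le
    (fun y hy => hψ.differentiableAt (isOpen_ball.mem_nhds (hsub hy))) hbl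
    (mem_closedBall_self hρ0.le) hz
  have hz' : ‖z‖ ≤ ρ := by simpa using hz
  have hπ1 : (1:ℝ) ≤ Real.pi := by linarith [Real.pi_gt_three]
  have hnp : ‖(Real.pi : ℂ)‖ = Real.pi := by
    rw [Complex.norm_real, Real.norm_eq_abs, abs_of_pos Real.pi_pos]
  have hψK : ‖ψ z‖ ≤ K := by
    have a1 : ‖2 * h 0 - 1‖ ≤ 2 * M + 1 := by
      have := norm_sub_le (2 * h 0) 1
      rw [norm_mul, Complex.norm_two, norm_one] at this
      linarith
    have a2 : ‖φ 0 / Real.pi‖ ≤ ‖φ 0‖ := by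
      rw [norm_div, hnp]
      exact div_le_self (norm_nonneg _) hπ1
    have a3 : ‖ψ z - ψ 0‖ ≤ 48 * 8 / (r - ρ) * ρ := by
      refine hmv.trans ?_
      rw [sub_zero]
      gcongr
    have a4 := norm_le_norm_add_norm_sub (ψ 0) (ψ z)
    rw [norm_sub_rev] at a4
    linarith
  have hzb := hsub hz
  have b1 : ‖φ z / Real.pi‖ ≤ Real.exp K := by
    rw [← hψe z hzb]
    exact (aux_norm_cos _).trans (Real.exp_le_exp.mpr hψK)
  have b2 : ‖φ z‖ ≤ 4 * Real.exp K := by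
    rw [norm_div, hnp, div_le_iff₀ Real.pi_pos] at b1
    nlinarith [Real.pi_le_four, Real.exp_pos K]
  have b3 : ‖2 * h z - 1‖ ≤ Real.exp (4 * Real.exp K) := by
    rw [← hφe z hzb]
    exact (aux_norm_cos _).trans (Real.exp_le_exp.mpr b2)
  have b4 := norm_sub_norm_le (2 * h z) 1
  rw [norm_mul, Complex.norm_two, norm_one] at b4
  linarith [norm_nonneg (h z)]

lemma aux_harnack {w : ℂ → ℂ} {ρ : ℝ} (hw : DifferentiableOn ℂ w (ball 0 ρ))
    (h0 : ∀ z ∈ ball (0:ℂ) ρ, w z ≠ 0) (h1 : ∀ z ∈ ball (0:ℂ) ρ, ‖w z‖ < 1)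
    {l : ℂ} (hl : l ∈ ball (0:ℂ) ρ) :
    |Real.log ‖w l‖ - Real.log ‖w 0‖| ≤ ‖l‖ / ρ * -(Real.log ‖w l‖ + Real.log ‖w 0‖) := by
  have hρ : 0 < ρ := nonempty_ball.mp ⟨_, hl⟩
  obtain ⟨v, hv, -, hve⟩ := aux_log hρ hw h0
  have hre : ∀ z ∈ ball (0:ℂ) ρ, Real.log ‖w z‖ = (v z).re := by
    intro z hz
    rw [← hve z hz, Complex.norm_exp, Real.log_exp]
  have hneg : ∀ z ∈ ball (0:ℂ) ρ, (v z).re < 0 := by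
    intro z hz
    rw [← hre z hz]
    exact Real.log_neg (norm_pos_iff.mpr (h0 z hz)) (h1 z hz)
  have hm : (0:ℂ) ∈ ball (0:ℂ) ρ := mem_ball_self hρ
  have hden : ∀ z ∈ ball (0:ℂ) ρ, v z + (starRingEnd ℂ) (v 0) ≠ 0 := by
    intro z hz e
    have := congrArg Complex.re e
    simp at this
    linarith [hneg z hz, hneg 0 hm]
  set k : ℂ → ℂ := fun z => (v z - v 0) / (v z + (starRingEnd ℂ) (v 0)) with hk
  have hk0 : k 0 = 0 := by simp [hk]
  have hsq1 : ∀ z, ‖v z - v 0‖ ^ 2 = ((v z).re - (v 0).re) ^ 2 + ((v z).im - (v 0).im) ^ 2 := by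
    intro z
    rw [← Complex.normSq_eq_norm_sq, Complex.normSq_apply]; simp; ring
  have hsq2 : ∀ z, ‖v z + (starRingEnd ℂ) (v 0)‖ ^ 2
      = ((v z).re + (v 0).re) ^ 2 + ((v z).im - (v 0).im) ^ 2 := by
    intro z
    rw [← Complex.normSq_eq_norm_sq, Complex.normSq_apply]; simp; ring
  have hmaps : MapsTo k (ball 0 ρ) (closedBall (k 0) 1) := by
    intro z hz
    rw [hk0, mem_closedBall_zero_iff, hk]
    simp only
    rw [norm_div]
    refine div_le_one_of_le₀ ?_ (norm_nonneg _)
    refine le_of_sq_le_sq ?_ (norm_nonneg _)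
    rw [hsq1, hsq2]
    nlinarith [hneg z hz, hneg 0 hm]
  have hs := Complex.dist_le_div_mul_dist_of_mapsTo_ball (f := k)
    ((hv.sub_const _).div (hv.add_const _) hden) hmaps hl
  rw [hk0, dist_zero_right, dist_zero_right] at hs
  rw [hre l hl, hre 0 hm]
  have hl' : ‖l‖ < ρ := by simpa using hl
  set s := ‖l‖ / ρ with hsdef
  have hs0 : 0 ≤ s := by positivity
  have hs1 : s < 1 := (div_lt_one hρ).mpr hl'
  have hs' : ‖v l - v 0‖ ≤ s * ‖v l + (starRingEnd ℂ) (v 0)‖ := by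
    rw [hk] at hs
    simp only at hs
    rw [norm_div, div_le_iff₀ (norm_pos_iff.mpr (hden l hl))] at hs
    calc _ ≤ _ := hs
      _ = _ := by rw [hsdef]; ring
  have hs2 : ‖v l - v 0‖ ^ 2 ≤ s ^ 2 * ‖v l + (starRingEnd ℂ) (v 0)‖ ^ 2 := by
    rw [← mul_pow]; gcongr
  rw [hsq1, hsq2] at hs2
  have hsum : 0 ≤ -((v l).re + (v 0).re) := by linarith [hneg l hl, hneg 0 hm]
  refine abs_le_of_sq_le_sq ?_ (by positivity)
  nlinarith [sq_nonneg ((v l).im - (v 0).im),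
    mul_nonneg (by nlinarith : 0 ≤ 1 - s ^ 2) (sq_nonneg ((v l).im - (v 0).im))]


lemma aux_bound (A : Set ℂ) (f : ℂ → ℂ → ℂ)
    (hHol : ∀ a ∈ A, DifferentiableOn ℂ (fun l => f l a) (ball (0:ℂ) 1))
    (hInj : ∀ l ∈ ball (0:ℂ) 1, InjOn (fun a => f l a) A)
    (hId : ∀ a ∈ A, f 0 a = a) {p q : ℂ} (hp : p ∈ A) (hq : q ∈ A) (hpq : p ≠ q)
    (N ρ : ℝ) (hρ0 : 0 < ρ) (hρ : ρ < 1) :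
    ∃ C : ℝ, ∀ a ∈ A, ‖a‖ ≤ N → ∀ z ∈ closedBall (0:ℂ) ρ, ‖f z a‖ ≤ C := by
  have hsub : closedBall (0:ℂ) ρ ⊆ ball 0 1 := closedBall_subset_ball hρ
  obtain ⟨P, hP⟩ := (isCompact_closedBall (0:ℂ) ρ).exists_bound_of_continuousOn
    ((hHol p hp).continuousOn.mono hsub)
  obtain ⟨Q, hQ⟩ := (isCompact_closedBall (0:ℂ) ρ).exists_bound_of_continuousOn
    ((hHol q hq).continuousOn.mono hsub)
  obtain ⟨S, hS⟩ := aux_schottky ((N + ‖p‖) / ‖q - p‖) ρ hρ0 hρ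
  have hm : (0:ℂ) ∈ closedBall (0:ℂ) ρ := mem_closedBall_self hρ0.le
  have hP0 : 0 ≤ P := (norm_nonneg _).trans (hP 0 hm)
  have hQ0 : 0 ≤ Q := (norm_nonneg _).trans (hQ 0 hm)
  have hne : ∀ a ∈ A, ∀ b ∈ A, a ≠ b → ∀ z ∈ ball (0:ℂ) 1, f z a - f z b ≠ 0 := by
    intro a ha b hb hab z hz e
    exact hab (hInj z hz ha hb (sub_eq_zero.mp e))
  refine ⟨|S| * (Q + P) + P + Q, ?_⟩
  intro a ha haN z hz
  have hnn : 0 ≤ |S| * (Q + P) := by positivity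
  by_cases hap : a = p
  · rw [hap]; linarith [hP z hz]
  by_cases haq : a = q
  · rw [haq]; linarith [hQ z hz]
  have h := hS (fun z => (f z a - f z p) / (f z q - f z p))
    (((hHol a ha).sub (hHol p hp)).div ((hHol q hq).sub (hHol p hp))
      (fun z hz => hne q hq p hp hpq.symm z hz))
    (fun z hz => div_ne_zero (hne a ha p hp hap z hz) (hne q hq p hp hpq.symm z hz))
    (by
      intro z hz e
      rw [div_eq_one_iff_eq (hne q hq p hp hpq.symm z hz)] at e
      exact hne a ha q hq haq z hz (by linear_combination e))
    (by
      simp only [hId a ha, hId p hp, hId q hq, norm_div]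
      gcongr
      exact (norm_sub_le _ _).trans (by linarith)) z hz
  have hpos := norm_pos_iff.mpr (hne q hq p hp hpq.symm z (hsub hz))
  simp only [norm_div] at h
  rw [div_le_iff₀ hpos] at h
  have h1 := norm_sub_norm_le (f z a) (f z p)
  have h2 : ‖f z q - f z p‖ ≤ Q + P := (norm_sub_le _ _).trans (add_le_add (hQ z hz) (hP z hz))
  have h3 : S * ‖f z q - f z p‖ ≤ |S| * (Q + P) := by
    calc _ ≤ |S| * ‖f z q - f z p‖ := by gcongr; exact le_abs_self S
      _ ≤ _ := by gcongr
  linarith [hP z hz]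

lemma aux_holder (A : Set ℂ) (f : ℂ → ℂ → ℂ)
    (hHol : ∀ a ∈ A, DifferentiableOn ℂ (fun l => f l a) (ball (0:ℂ) 1))
    (hInj : ∀ l ∈ ball (0:ℂ) 1, InjOn (fun a => f l a) A)
    (hId : ∀ a ∈ A, f 0 a = a) {p q : ℂ} (hp : p ∈ A) (hq : q ∈ A) (hpq : p ≠ q)
    (N : ℝ) {l : ℂ} (hl : l ∈ ball (0:ℂ) 1) :
    ∃ K κ : ℝ, 0 < K ∧ 0 < κ ∧ ∀ a ∈ A, ‖a‖ ≤ N → ∀ b ∈ A, ‖b‖ ≤ N →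
      dist (f l a) (f l b) ≤ K * (dist a b / K) ^ κ ∧
      K * (dist a b / K) ^ κ⁻¹ ≤ dist (f l a) (f l b) := by
  have hl1 : ‖l‖ < 1 := by simpa using hl
  set ρ := (1 + ‖l‖) / 2 with hρd
  have hρ0 : 0 < ρ := by positivity
  have hρ1 : ρ < 1 := by linarith
  have hlρ : ‖l‖ < ρ := by linarith
  obtain ⟨C, hC⟩ := aux_bound A f hHol hInj hId hp hq hpq N ρ hρ0 hρ1
  set s := ‖l‖ / ρ with hs
  have hs0 : 0 ≤ s := by positivity
  have hs1 : s < 1 := (div_lt_one hρ0).mpr hlρ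
  set K := 2 * |C| + 1 with hK
  have hK0 : 0 < K := by positivity
  have hκ : 0 < (1 - s) / (1 + s) := div_pos (by linarith) (by linarith)
  refine ⟨K, (1 - s) / (1 + s), hK0, hκ, ?_⟩
  intro a ha haN b hb hbN
  by_cases hab : a = b
  · rw [hab]
    simp [Real.zero_rpow hκ.ne', Real.zero_rpow (inv_ne_zero hκ.ne')]
    rw [← inv_div, Real.zero_rpow (inv_ne_zero hκ.ne')]; simp
  have hsub : closedBall (0:ℂ) ρ ⊆ ball 0 1 := closedBall_subset_ball hρ1
  have hsub' : ball (0:ℂ) ρ ⊆ ball 0 1 := ball_subset_ball hρ1.le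
  have hne : ∀ z ∈ ball (0:ℂ) 1, f z a - f z b ≠ 0 := by
    intro z hz e
    exact hab (hInj z hz ha hb (sub_eq_zero.mp e))
  have hKc : (K : ℂ) ≠ 0 := by exact_mod_cast hK0.ne'
  have hKn : ‖(K : ℂ)‖ = K := by
    rw [Complex.norm_real, Real.norm_eq_abs, abs_of_pos hK0]
  have hh := aux_harnack (w := fun z => (f z a - f z b) / K) (ρ := ρ)
    ((((hHol a ha).sub (hHol b hb)).mono hsub').div_const _)
    (fun z hz => div_ne_zero (hne z (hsub' hz)) hKc)
    (by
      intro z hz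
      rw [norm_div, hKn, div_lt_one hK0]
      have h1 := hC a ha haN z (ball_subset_closedBall hz)
      have h2 := hC b hb hbN z (ball_subset_closedBall hz)
      have := norm_sub_le (f z a) (f z b)
      linarith [le_abs_self C]) (l := l) (by simpa using hlρ)
  simp only [norm_div, hKn, hId a ha, hId b hb, ← dist_eq_norm] at hh
  have hd0 : 0 < dist a b := dist_pos.mpr hab
  have hd1 : 0 < dist (f l a) (f l b) := by
    rw [dist_eq_norm]; exact norm_pos_iff.mpr (hne l hl)
  set x := dist (f l a) (f l b) / K with hx
  set y := dist a b / K with hy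
  have hx0 : 0 < x := by positivity
  have hy0 : 0 < y := by positivity
  have hxK : dist (f l a) (f l b) = K * x := by rw [hx]; field_simp
  rw [hxK]
  rw [abs_le] at hh
  constructor
  · gcongr
    rw [← Real.log_le_log_iff hx0 (by positivity), Real.log_rpow hy0, div_mul_eq_mul_div,
      le_div_iff₀ (by linarith)]
    linarith [hh.1, hh.2]
  · gcongr
    rw [← Real.log_le_log_iff (by positivity) hx0, Real.log_rpow hy0, inv_div, div_mul_eq_mul_div,
      div_le_iff₀ (by linarith)]
    linarith [hh.1, hh.2]

/-- Extension λ-lemma: for each parameter λ in the unit disk, the map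
`a ↦ f λ a` of a holomorphic motion extends to a continuous injection
of the closure of `A` into `ℂ`. -/
theorem stmt_0 (A : Set ℂ) (f : ℂ → ℂ → ℂ)
    (hHol : ∀ a ∈ A, DifferentiableOn ℂ (fun l => f l a) (Metric.ball (0:ℂ) 1))
    (hInj : ∀ l ∈ Metric.ball (0:ℂ) 1, Set.InjOn (fun a => f l a) A)
    (hId : ∀ a ∈ A, f 0 a = a) :
    ∀ l ∈ Metric.ball (0:ℂ) 1, ∃ g : ℂ → ℂ,
      ContinuousOn g (closure A) ∧ Set.InjOn g (closure A) ∧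
      ∀ a ∈ A, g a = f l a := by
  intro l hl
  by_cases hA : A.Subsingleton
  · have := hA.closure
    exact ⟨f l, this.continuousOn _, this.injOn _, fun _ _ => rfl⟩
  rw [Set.not_subsingleton_iff] at hA
  obtain ⟨p, hp, q, hq, hpq⟩ := hA
  have key := fun N => aux_holder A f hHol hInj hId hp hq hpq N hl
  have hlim : ∀ x ∈ closure A, ∃ y, Tendsto (f l) (𝓝[A] x) (𝓝 y) := by
    intro x hx
    haveI := mem_closure_iff_nhdsWithin_neBot.mp hx
    obtain ⟨K, κ, hK, hκ, hb⟩ := key (‖x‖ + 1)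
    apply cauchy_map_iff_exists_tendsto.mp
    rw [cauchy_map_iff]
    refine ⟨inferInstance, ?_⟩
    rw [tendsto_uniformity_iff_dist_tendsto_zero]
    have hev : ∀ᶠ a in 𝓝[A] x, a ∈ A ∧ ‖a‖ ≤ ‖x‖ + 1 := by
      refine eventually_mem_nhdsWithin.and ?_
      refine nhdsWithin_le_nhds ?_
      filter_upwards [ball_mem_nhds x one_pos] with a ha
      have := norm_le_norm_add_norm_sub x a
      rw [mem_ball, dist_eq_norm, norm_sub_rev] at ha
      linarith
    have ht : Tendsto (fun ab : ℂ × ℂ => K * (dist ab.1 ab.2 / K) ^ κ)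
        (𝓝[A] x ×ˢ 𝓝[A] x) (𝓝 0) := by
      have hc : Continuous (fun ab : ℂ × ℂ => K * (dist ab.1 ab.2 / K) ^ κ) :=
        continuous_const.mul ((continuous_dist.div_const K).rpow_const (fun _ => Or.inr hκ.le))
      have := hc.tendsto (x, x)
      simp only [dist_self, zero_div, Real.zero_rpow hκ.ne', mul_zero] at this
      refine this.mono_left ?_
      rw [nhds_prod_eq]
      exact Filter.prod_mono nhdsWithin_le_nhds nhdsWithin_le_nhds
    refine squeeze_zero' (Eventually.of_forall fun _ => dist_nonneg) ?_ ht
    filter_upwards [hev.prod_mk hev] with ab hab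
    exact (hb ab.1 hab.1.1 hab.1.2 ab.2 hab.2.1 hab.2.2).1
  have htend : ∀ x ∈ closure A, Tendsto (f l) (𝓝[A] x) (𝓝 (extendFrom A (f l) x)) :=
    fun x hx => tendsto_extendFrom (hlim x hx)
  refine ⟨extendFrom A (f l), continuousOn_extendFrom Subset.rfl hlim, ?_, ?_⟩
  · intro x hx y hy hxy
    by_contra hne
    haveI := mem_closure_iff_nhdsWithin_neBot.mp hx
    haveI := mem_closure_iff_nhdsWithin_neBot.mp hy
    obtain ⟨K, κ, hK, hκ, hb⟩ := key (‖x‖ + ‖y‖ + 1)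
    have hev : ∀ u : ℂ, ‖u‖ ≤ ‖x‖ + ‖y‖ →
        ∀ᶠ a in 𝓝[A] u, a ∈ A ∧ ‖a‖ ≤ ‖x‖ + ‖y‖ + 1 := by
      intro u hu
      refine eventually_mem_nhdsWithin.and ?_
      refine nhdsWithin_le_nhds ?_
      filter_upwards [ball_mem_nhds u one_pos] with a ha
      have := norm_le_norm_add_norm_sub u a
      rw [mem_ball, dist_eq_norm, norm_sub_rev] at ha
      linarith
    have hc : Continuous (fun ab : ℂ × ℂ => K * (dist ab.1 ab.2 / K) ^ κ⁻¹) :=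
      continuous_const.mul ((continuous_dist.div_const K).rpow_const
        (fun _ => Or.inr (inv_pos.mpr hκ).le))
    have h1 : Tendsto (fun ab : ℂ × ℂ => K * (dist ab.1 ab.2 / K) ^ κ⁻¹)
        (𝓝[A] x ×ˢ 𝓝[A] y) (𝓝 (K * (dist x y / K) ^ κ⁻¹)) := by
      refine (hc.tendsto (x, y)).mono_left ?_
      rw [nhds_prod_eq]
      exact Filter.prod_mono nhdsWithin_le_nhds nhdsWithin_le_nhds
    have h2 : Tendsto (fun ab : ℂ × ℂ => dist (f l ab.1) (f l ab.2))
        (𝓝[A] x ×ˢ 𝓝[A] y) (𝓝 (dist (extendFrom A (f l) x) (extendFrom A (f l) y))) :=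
      ((htend x hx).comp tendsto_fst).dist ((htend y hy).comp tendsto_snd)
    have h3 := le_of_tendsto_of_tendsto h1 h2 (by
      filter_upwards [(hev x (by linarith [norm_nonneg y])).prod_mk
        (hev y (by linarith [norm_nonneg x]))] with ab hab
      exact (hb ab.1 hab.1.1 hab.1.2 ab.2 hab.2.1 hab.2.2).2)
    rw [hxy, dist_self] at h3
    have : 0 < dist x y := dist_pos.mpr hne
    have : 0 < K * (dist x y / K) ^ κ⁻¹ := by positivity
    linarith
  · intro a ha
    have h1 := htend a (subset_closure ha)
    exact (tendsto_nhds_unique (h1.mono_left (pure_le_nhdsWithin ha)) (tendsto_pure_nhds _ _))
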